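/- arXiv:1212.6085 — 2 statements merged into one kernel-verified Lean document; each statement's English description precedes it below -/
import Mathlib

section
/- Let n ≥ 1 and let p, q ∈ ℝⁿ. Set λ = (1/2)·max_{1≤i≤n} (p_i − q_i). Define the vector u ∈ ℝ^{n+1} by u_0 = 0 and u_i = p_i − λ for i = 1, …, n. Then u is a max-plus eigenvector with eigenvalue λ of the (n+1)×(n+1) block matrix A over ℝ ∪ {−∞} whose (0, i) entry is −q_i, whose (i, 0) entry is p_i (for i = 1, …, n), and whose all other entries are −∞; concretely: max_{1≤i≤n} (−q_i + u_i) = λ + u_0, and p_i + u_0 = λ + u_i for every i = 1, …, n. -/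
/-!
The matrix is an arrow: row `0` reads only the entries `u i.succ`, and row `i.succ` only `u 0`.
Row `i.succ` of the eigenvalue equation therefore says `u i.succ = u 0 + (p i - lam)`, and
substituting this into row `0` leaves `max (p i - q i) - lam = lam`.
-/

/-- `(lam, u)` is a max-plus eigenpair of the square matrix `A` over `G ∪ {-∞}`. The eigenvalue and
the coordinates of the eigenvector are required to be finite. -/
def IsMaxPlusEigenpair {ι G : Type*} [Fintype ι] [Nonempty ι] [SemilatticeSup G] [Add G]
    (A : ι → ι → WithBot G) (lam : G) (u : ι → G) : Prop :=
  ∀ k, Finset.univ.sup' Finset.univ_nonempty (fun l => A k l + (u l : WithBot G)) =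
    ((lam + u k : G) : WithBot G)

theorem sup'_univ_eq_of_forall_ne_eq_bot {ι α : Type*} [Fintype ι] [Nonempty ι]
    [SemilatticeSup α] [OrderBot α] {f : ι → α} {i : ι} (hf : ∀ j ≠ i, f j = ⊥) :
    Finset.univ.sup' Finset.univ_nonempty f = f i := by
  refine le_antisymm (Finset.sup'_le _ _ fun j _ => ?_) (Finset.le_sup' f (Finset.mem_univ i))
  obtain rfl | hji := eq_or_ne j i
  · exact le_rfl
  · exact (hf j hji).trans_le bot_le

theorem sup'_univ_succ_eq_coe_sup' {n : ℕ} [NeZero n] {α : Type*} [SemilatticeSup α]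
    {f : Fin (n + 1) → WithBot α} {g : Fin n → α} (hzero : f 0 = ⊥)
    (hsucc : ∀ i : Fin n, f i.succ = g i) :
    Finset.univ.sup' Finset.univ_nonempty f =
      (Finset.univ.sup' Finset.univ_nonempty g : α) := by
  have hfg : f ∘ Fin.succ = WithBot.some ∘ g := funext hsucc
  rw [Finset.sup'_eq_sup, Finset.coe_sup', Fin.univ_succ, Finset.sup_cons, Finset.sup_map, hzero,
    bot_sup_eq]
  exact congrArg _ hfg

theorem isMaxPlusEigenpair_arrow_iff {n : ℕ} [NeZero n] {G : Type*} [SemilatticeSup G] [Add G]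
    {A : Fin (n + 1) → Fin (n + 1) → WithBot G} {r c : Fin n → G}
    (hA00 : A 0 0 = ⊥) (hA0i : ∀ i : Fin n, A 0 i.succ = r i)
    (hAi0 : ∀ i : Fin n, A i.succ 0 = c i) (hAij : ∀ i j : Fin n, A i.succ j.succ = ⊥)
    {lam : G} {u : Fin (n + 1) → G} :
    IsMaxPlusEigenpair A lam u ↔
      Finset.univ.sup' Finset.univ_nonempty (fun i : Fin n => r i + u i.succ) = lam + u 0 ∧
        ∀ i : Fin n, c i + u 0 = lam + u i.succ := by
  have row_zero : Finset.univ.sup' Finset.univ_nonempty (fun l => A 0 l + (u l : WithBot G)) =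
      (Finset.univ.sup' Finset.univ_nonempty (fun i : Fin n => r i + u i.succ) : G) :=
    sup'_univ_succ_eq_coe_sup' (by rw [hA00, WithBot.bot_add])
      fun i => by rw [hA0i, WithBot.coe_add]
  have row_succ (i : Fin n) : Finset.univ.sup' Finset.univ_nonempty
      (fun l => A i.succ l + (u l : WithBot G)) = (c i + u 0 : G) := by
    rw [sup'_univ_eq_of_forall_ne_eq_bot (i := 0), hAi0, WithBot.coe_add]
    intro l hl
    obtain ⟨j, rfl⟩ := Fin.exists_succ_eq.mpr hl
    rw [hAij, WithBot.bot_add]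
  simp only [IsMaxPlusEigenpair, Fin.forall_fin_succ, row_zero, row_succ, WithBot.coe_inj]

theorem sup'_neg_add_add_sub_of_two_nsmul_eq {ι G : Type*} [AddCommGroup G] [LinearOrder G]
    [IsOrderedAddMonoid G] {s : Finset ι} (hs : s.Nonempty) {p q : ι → G} {lam : G}
    (hlam : 2 • lam = s.sup' hs (fun i => p i - q i)) (a : G) :
    s.sup' hs (fun i => -q i + (a + (p i - lam))) = lam + a := by
  have hterm (i : ι) : -q i + (a + (p i - lam)) = p i - q i + (a - lam) := by abel
  calc s.sup' hs (fun i => -q i + (a + (p i - lam)))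
      = s.sup' hs (fun i => p i - q i + (a - lam)) := by simp only [hterm]
    _ = s.sup' hs (fun i => p i - q i) + (a - lam) := (Finset.sup'_add s _ _ hs).symm
    _ = lam + a := by rw [← hlam]; abel

theorem stmt10_general {n : ℕ} [NeZero n] {G : Type*} [AddCommGroup G] [LinearOrder G]
    [IsOrderedAddMonoid G] (p q : Fin n → G) (lam : G)
    (hlam : 2 • lam = Finset.univ.sup' Finset.univ_nonempty (fun i => p i - q i))
    (A : Fin (n + 1) → Fin (n + 1) → WithBot G)
    (hA00 : A 0 0 = ⊥) (hA0i : ∀ i : Fin n, A 0 i.succ = ((-q i : G) : WithBot G))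
    (hAi0 : ∀ i : Fin n, A i.succ 0 = (p i : WithBot G))
    (hAij : ∀ i j : Fin n, A i.succ j.succ = ⊥)
    (u : Fin (n + 1) → G) (hui : ∀ i : Fin n, u i.succ = u 0 + (p i - lam)) :
    IsMaxPlusEigenpair A lam u ∧
    Finset.univ.sup' Finset.univ_nonempty (fun i : Fin n => -q i + u i.succ) = lam + u 0 ∧
    (∀ i : Fin n, p i + u 0 = lam + u i.succ) := by
  have row_zero : Finset.univ.sup' Finset.univ_nonempty (fun i : Fin n => -q i + u i.succ) =
      lam + u 0 := by
    simpa only [hui] using sup'_neg_add_add_sub_of_two_nsmul_eq _ hlam (u 0)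
  have row_succ (i : Fin n) : p i + u 0 = lam + u i.succ := by rw [hui]; abel
  exact ⟨(isMaxPlusEigenpair_arrow_iff hA00 hA0i hAi0 hAij).mpr ⟨row_zero, row_succ⟩,
    row_zero, row_succ⟩

theorem stmt10 (n : ℕ) [NeZero n] (p q : Fin n → ℝ) (lam : ℝ)
    (hlam : lam = (1 / 2) * Finset.univ.sup' Finset.univ_nonempty (fun i => p i - q i))
    (A : Fin (n + 1) → Fin (n + 1) → WithBot ℝ)
    (hA00 : A 0 0 = ⊥)
    (hA0i : ∀ i : Fin n, A 0 i.succ = ((-q i : ℝ) : WithBot ℝ))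
    (hAi0 : ∀ i : Fin n, A i.succ 0 = ((p i : ℝ) : WithBot ℝ))
    (hAij : ∀ i j : Fin n, A i.succ j.succ = ⊥)
    (u : Fin (n + 1) → ℝ)
    (hu0 : u 0 = 0)
    (hui : ∀ i : Fin n, u i.succ = p i - lam) :
    -- `u` is a max-plus eigenvector of `A` with eigenvalue `lam`:
    (∀ k, Finset.univ.sup' Finset.univ_nonempty
        (fun l => A k l + ((u l : ℝ) : WithBot ℝ)) = ((lam + u k : ℝ) : WithBot ℝ)) ∧
    -- concretely:
    Finset.univ.sup' Finset.univ_nonempty (fun i : Fin n => -q i + u i.succ) = lam + u 0 ∧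
    (∀ i : Fin n, p i + u 0 = lam + u i.succ) := by
  exact stmt10_general p q lam (by rw [hlam]; ring) A hA00 hA0i hAi0 hAij u
    fun i => by rw [hu0, zero_add, hui]
end

section
/- Let n ≥ 1 and let p, q ∈ ℝⁿ. Consider the (n+1)×(n+1) matrix A over ℝ ∪ {−∞} whose (0, i) entry is −q_i, whose (i, 0) entry is p_i (for i = 1, …, n), and whose all other entries are −∞, with matrix powers taken in the max-plus sense (matrix product (B·C)_{kl} = max_s (b_{ks} + c_{sl}), additive identities being −∞). Then for every integer k ≥ 1, the max-plus trace of the odd power A^{2k−1} (i.e. the maximum of its diagonal entries) equals −∞, and the max-plus trace of the even power A^{2k} equals k · max_{1≤i≤n} (p_i − q_i). -/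
/-- Max-plus matrix multiplication over `ℝ ∪ {-∞}`:
`(B ⬝ C)_{k l} = max_s (b_{k s} + c_{s l})`. -/
noncomputable def mpMul {k : ℕ} [NeZero k] (B C : Fin k → Fin k → WithBot ℝ) :
    Fin k → Fin k → WithBot ℝ :=
  fun i j => Finset.univ.sup' Finset.univ_nonempty (fun s => B i s + C s j)

/-- Max-plus matrix power; the 0th power is the max-plus identity matrix
(`0` on the diagonal, `-∞` elsewhere), so that `mpPow B 1 = B`. -/
noncomputable def mpPow {k : ℕ} [NeZero k] (B : Fin k → Fin k → WithBot ℝ) :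
    ℕ → (Fin k → Fin k → WithBot ℝ)
  | 0 => fun i j => if i = j then ((0 : ℝ) : WithBot ℝ) else ⊥
  | m + 1 => mpMul B (mpPow B m)

/-- Max-plus trace: the maximum of the diagonal entries. -/
noncomputable def mpTr {k : ℕ} [NeZero k] (B : Fin k → Fin k → WithBot ℝ) : WithBot ℝ :=
  Finset.univ.sup' Finset.univ_nonempty (fun i => B i i)

/-! If every finite entry of `A` joins a hub `h` to another index, a closed walk alternates between
`h` and the other indices. Hence odd powers have no finite diagonal entry, and
`A³ = c ⊗ A` with `c = (A²)ₕₕ`, the best weight of a round trip from the hub. Iterating,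
`A^(2k-1) = c^(k-1) ⊗ A` and `A^(2k) = c^(k-1) ⊗ A²`, and it remains to see that `tr A = -∞` and
`tr A² = c`. The scalar multiple `c ⊗ B` is written `c +ᵥ B`. -/

theorem add_finset_sup' {ι M : Type*} [LinearOrder M] [Add M] [AddLeftMono M] {s : Finset ι}
    (hs : s.Nonempty) (f : ι → M) (c : M) : c + s.sup' hs f = s.sup' hs fun i => c + f i :=
  Finset.apply_sup'_eq_sup'_comp hs (c + ·) fun a b => (max_add_add_left c a b).symm

section MaxPlus

variable {k : ℕ} [NeZero k]

theorem add_le_mpMul_apply (B C : Fin k → Fin k → WithBot ℝ) (i s j : Fin k) :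
    B i s + C s j ≤ mpMul B C i j :=
  Finset.le_sup' (fun s => B i s + C s j) (Finset.mem_univ s)

theorem mpMul_apply_le_iff {B C : Fin k → Fin k → WithBot ℝ} {i j : Fin k} {a : WithBot ℝ} :
    mpMul B C i j ≤ a ↔ ∀ s, B i s + C s j ≤ a := by
  simp [mpMul]

theorem mpMul_apply_eq_of_forall_ne {B C : Fin k → Fin k → WithBot ℝ} {i j t : Fin k}
    (h : ∀ s, s ≠ t → B i s + C s j = ⊥) : mpMul B C i j = B i t + C t j := by
  refine le_antisymm (mpMul_apply_le_iff.2 fun s => ?_) (add_le_mpMul_apply B C i t j)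
  obtain rfl | hs := eq_or_ne s t
  · exact le_rfl
  · exact (h s hs).trans_le bot_le

theorem mpMul_vadd (c : WithBot ℝ) (B C : Fin k → Fin k → WithBot ℝ) :
    mpMul B (c +ᵥ C) = c +ᵥ mpMul B C := by
  funext i j
  simp only [mpMul, Pi.vadd_apply, vadd_eq_add, add_finset_sup', add_left_comm]

theorem mpTr_vadd (c : WithBot ℝ) (B : Fin k → Fin k → WithBot ℝ) :
    mpTr (c +ᵥ B) = c + mpTr B := by
  simp only [mpTr, Pi.vadd_apply, vadd_eq_add, add_finset_sup']

theorem mpPow_succ (B : Fin k → Fin k → WithBot ℝ) (m : ℕ) :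
    mpPow B (m + 1) = mpMul B (mpPow B m) :=
  rfl

theorem mpPow_one (B : Fin k → Fin k → WithBot ℝ) : mpPow B 1 = B := by
  funext i j
  rw [mpPow_succ, mpMul_apply_eq_of_forall_ne (t := j)] <;> simp +contextual [mpPow]

theorem mpPow_two (B : Fin k → Fin k → WithBot ℝ) : mpPow B 2 = mpMul B B := by
  rw [mpPow_succ, mpPow_one]

theorem mpPow_add_eq_vadd_of_le {B : Fin k → Fin k → WithBot ℝ} {c : WithBot ℝ} {r d : ℕ}
    (h : mpPow B (r + d) = c +ᵥ mpPow B r) {s : ℕ} (hs : r ≤ s) :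
    mpPow B (s + d) = c +ᵥ mpPow B s := by
  induction s, hs using Nat.le_induction with
  | base => exact h
  | succ s _ ih => rw [Nat.add_right_comm, mpPow_succ, ih, mpMul_vadd, mpPow_succ]

theorem mpPow_add_mul_eq_nsmul_vadd_of_le {B : Fin k → Fin k → WithBot ℝ} {c : WithBot ℝ} {r d : ℕ}
    (h : mpPow B (r + d) = c +ᵥ mpPow B r) {s : ℕ} (hs : r ≤ s) (m : ℕ) :
    mpPow B (s + d * m) = (m • c) +ᵥ mpPow B s := by
  induction m with
  | zero => simp
  | succ m ih =>
    rw [Nat.mul_succ, ← Nat.add_assoc, mpPow_add_eq_vadd_of_le h (by omega), ih, succ_nsmul',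
      add_vadd]

end MaxPlus

/-- `A` is star-shaped with hub `h`: the directed graph of its finite entries only has edges between
`h` and another index. For `h = 0` this is the block shape `[[-∞, r], [c, -∞]]`, where the row `r`
and the column `c` may themselves have entries `-∞`. -/
def IsStarShaped {k : ℕ} (A : Fin k → Fin k → WithBot ℝ) (h : Fin k) : Prop :=
  ∀ i j, (i = h ↔ j = h) → A i j = ⊥

namespace IsStarShaped

variable {k : ℕ} {A : Fin k → Fin k → WithBot ℝ} {h : Fin k}

theorem apply_hub (hA : IsStarShaped A h) : A h h = ⊥ :=
  hA h h Iff.rfl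

theorem apply_of_ne (hA : IsStarShaped A h) {i j : Fin k} (hi : i ≠ h) (hj : j ≠ h) : A i j = ⊥ :=
  hA i j (iff_of_false hi hj)

variable [NeZero k]

theorem mpMul_apply_of_ne (hA : IsStarShaped A h) (B : Fin k → Fin k → WithBot ℝ) {i : Fin k}
    (hi : i ≠ h) (j : Fin k) : mpMul A B i j = A i h + B h j :=
  mpMul_apply_eq_of_forall_ne fun s hs => by rw [hA.apply_of_ne hi hs, WithBot.bot_add]

theorem mpMul_self_hub_of_ne (hA : IsStarShaped A h) {j : Fin k} (hj : j ≠ h) :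
    mpMul A A h j = ⊥ := by
  rw [mpMul_apply_eq_of_forall_ne fun s hs => by rw [hA.apply_of_ne hs hj, WithBot.add_bot],
    hA.apply_hub, WithBot.bot_add]

theorem mpMul_mpMul_self (hA : IsStarShaped A h) :
    mpMul A (mpMul A A) = mpMul A A h h +ᵥ A := by
  funext i j
  rw [Pi.vadd_apply, Pi.vadd_apply, vadd_eq_add]
  obtain rfl | hi := eq_or_ne i h
  · have round_trip (s : Fin k) : A i s + mpMul A A s j = A i j + (A i s + A s i) := by
      obtain rfl | hs := eq_or_ne s i
      · simp only [hA.apply_hub, WithBot.bot_add, WithBot.add_bot]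
      · rw [hA.mpMul_apply_of_ne A hs, ← add_assoc, add_comm]
    calc mpMul A (mpMul A A) i j
        = Finset.univ.sup' Finset.univ_nonempty fun s => A i j + (A i s + A s i) :=
          Finset.sup'_congr _ rfl fun s _ => round_trip s
      _ = A i j + mpMul A A i i := (add_finset_sup' _ _ _).symm
      _ = mpMul A A i i + A i j := add_comm _ _
  · rw [hA.mpMul_apply_of_ne _ hi]
    obtain rfl | hj := eq_or_ne j h
    · exact add_comm _ _
    · rw [hA.mpMul_self_hub_of_ne hj, hA.apply_of_ne hi hj, WithBot.add_bot, WithBot.add_bot]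

theorem mpTr_eq_bot (hA : IsStarShaped A h) : mpTr A = ⊥ :=
  le_bot_iff.1 <| Finset.sup'_le _ _ fun i _ => (hA i i Iff.rfl).le

theorem mpTr_mpMul_self (hA : IsStarShaped A h) : mpTr (mpMul A A) = mpMul A A h h := by
  refine le_antisymm (Finset.sup'_le _ _ fun i _ => ?_)
    (Finset.le_sup' (fun i => mpMul A A i i) (Finset.mem_univ h))
  obtain rfl | hi := eq_or_ne i h
  · exact le_rfl
  · calc mpMul A A i i = A h i + A i h := by rw [hA.mpMul_apply_of_ne A hi, add_comm]
      _ ≤ mpMul A A h h := add_le_mpMul_apply A A h i h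

theorem mpPow_add_two_mul (hA : IsStarShaped A h) {s : ℕ} (hs : 1 ≤ s) (m : ℕ) :
    mpPow A (s + 2 * m) = (m • mpMul A A h h) +ᵥ mpPow A s := by
  refine mpPow_add_mul_eq_nsmul_vadd_of_le ?_ hs m
  rw [mpPow_one, Nat.add_comm, mpPow_succ, mpPow_two, hA.mpMul_mpMul_self]

end IsStarShaped

theorem isStarShaped_zero {n : ℕ} {A : Fin (n + 1) → Fin (n + 1) → WithBot ℝ}
    (h00 : A 0 0 = ⊥) (hss : ∀ i j : Fin n, A i.succ j.succ = ⊥) : IsStarShaped A 0 := by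
  intro i j hij
  cases i using Fin.cases <;> cases j using Fin.cases <;> simp_all

theorem mpMul_self_zero_zero_eq_coe_sup' {n : ℕ} [NeZero n] {p q : Fin n → ℝ}
    {A : Fin (n + 1) → Fin (n + 1) → WithBot ℝ} (h00 : A 0 0 = ⊥)
    (h0s : ∀ i : Fin n, A 0 i.succ = ((-q i : ℝ) : WithBot ℝ))
    (hs0 : ∀ i : Fin n, A i.succ 0 = ((p i : ℝ) : WithBot ℝ)) :
    mpMul A A 0 0 =
      ((Finset.univ.sup' Finset.univ_nonempty (fun i => p i - q i) : ℝ) : WithBot ℝ) := by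
  have round_trip (i : Fin n) : A 0 i.succ + A i.succ 0 = ((p i - q i : ℝ) : WithBot ℝ) := by
    rw [h0s, hs0, ← WithBot.coe_add, neg_add_eq_sub]
  refine eq_of_forall_ge_iff fun a => ?_
  rw [mpMul_apply_le_iff, Fin.forall_fin_succ, Finset.coe_sup', Finset.sup_le_iff]
  simp [h00, round_trip]

theorem stmt12_general {n : ℕ} [NeZero n] {A : Fin n → Fin n → WithBot ℝ} {h : Fin n}
    (hA : IsStarShaped A h) {k : ℕ} (hk : 1 ≤ k) :
    mpTr (mpPow A (2 * k - 1)) = ⊥ ∧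
    mpTr (mpPow A (2 * k)) = k • mpMul A A h h := by
  obtain ⟨m, rfl⟩ := Nat.exists_eq_add_of_le hk
  constructor
  · rw [show 2 * (1 + m) - 1 = 1 + 2 * m by omega, hA.mpPow_add_two_mul le_rfl, mpTr_vadd,
      mpPow_one, hA.mpTr_eq_bot, WithBot.add_bot]
  · rw [Nat.mul_add, Nat.mul_one, hA.mpPow_add_two_mul one_le_two, mpTr_vadd, mpPow_two,
      hA.mpTr_mpMul_self, ← succ_nsmul, Nat.add_comm]

theorem stmt12 (n : ℕ) [NeZero n] (p q : Fin n → ℝ)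
    (A : Fin (n + 1) → Fin (n + 1) → WithBot ℝ)
    (hA00 : A 0 0 = ⊥)
    (hA0i : ∀ i : Fin n, A 0 i.succ = ((-q i : ℝ) : WithBot ℝ))
    (hAi0 : ∀ i : Fin n, A i.succ 0 = ((p i : ℝ) : WithBot ℝ))
    (hAij : ∀ i j : Fin n, A i.succ j.succ = ⊥)
    (k : ℕ) (hk : 1 ≤ k) :
    mpTr (mpPow A (2 * k - 1)) = ⊥ ∧
    mpTr (mpPow A (2 * k)) =
      (((k : ℝ) * Finset.univ.sup' Finset.univ_nonempty (fun i => p i - q i) : ℝ) :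
        WithBot ℝ) := by
  rw [← nsmul_eq_mul, WithBot.coe_nsmul, ← mpMul_self_zero_zero_eq_coe_sup' hA00 hA0i hAi0]
  exact stmt12_general (isStarShaped_zero hA00 hAij) hk
end
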